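/- Let d ≥ 1 be an integer and let α, β ∈ ℝ satisfy α + β > d (with no upper restriction on α or β). Then there exists a constant C > 0 such that for every n ∈ ℤ^d one has ∑_{n₁ ∈ ℤ^d, (1/2)|n−n₁| ≤ |n₁| ≤ 2|n−n₁|} ⟨n₁⟩^{-α} ⟨n − n₁⟩^{-β} ≤ C ⟨n⟩^{d − α − β}. -/

import Mathlib

/-- Japanese bracket of a lattice point `n ∈ ℤ^d`: `⟨n⟩ = (1 + |n|²)^{1/2}`
where `|·|` is the Euclidean norm. -/
noncomputable def jb {d : ℕ} (n : Fin d → ℤ) : ℝ :=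
  Real.sqrt (1 + ∑ i, ((n i : ℝ)) ^ 2)

/-- Euclidean norm of a lattice point `n ∈ ℤ^d`. -/
noncomputable def enorm' {d : ℕ} (n : Fin d → ℤ) : ℝ :=
  Real.sqrt (∑ i, ((n i : ℝ)) ^ 2)

lemma jb_sq {d : ℕ} (n : Fin d → ℤ) : jb n ^ 2 = 1 + ∑ i, ((n i : ℝ)) ^ 2 := by
  unfold jb
  exact Real.sq_sqrt (by positivity)

lemma enorm'_sq {d : ℕ} (n : Fin d → ℤ) : enorm' n ^ 2 = ∑ i, ((n i : ℝ)) ^ 2 := by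
  unfold enorm'
  exact Real.sq_sqrt (by positivity)

lemma one_le_jb {d : ℕ} (n : Fin d → ℤ) : 1 ≤ jb n := by
  unfold jb
  rw [Real.one_le_sqrt]
  have : 0 ≤ ∑ i, ((n i : ℝ)) ^ 2 := by positivity
  linarith

lemma jb_le_two {d : ℕ} (a b : Fin d → ℤ) (h : enorm' a ≤ 2 * enorm' b) :
    jb a ≤ 2 * jb b := by
  have ha := one_le_jb a
  have hb := one_le_jb b
  have h0 : 0 ≤ enorm' a := Real.sqrt_nonneg _
  have h1 : enorm' a ^ 2 ≤ (2 * enorm' b) ^ 2 := pow_le_pow_left₀ h0 h 2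
  rw [mul_pow, enorm'_sq, enorm'_sq] at h1
  apply le_of_sq_le_sq _ (by linarith)
  rw [mul_pow, jb_sq, jb_sq]
  linarith

lemma jb_le_four {d : ℕ} (n m : Fin d → ℤ) (h : enorm' (n - m) ≤ 2 * enorm' m) :
    jb n ≤ 4 * jb m := by
  have hb := one_le_jb m
  have h0 : 0 ≤ enorm' (n - m) := Real.sqrt_nonneg _
  have h1 : enorm' (n - m) ^ 2 ≤ (2 * enorm' m) ^ 2 := pow_le_pow_left₀ h0 h 2
  rw [mul_pow, enorm'_sq, enorm'_sq] at h1
  have h2 : ∑ i, ((n i : ℝ)) ^ 2 ≤ 2 * ∑ i, ((m i : ℝ)) ^ 2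
      + 2 * ∑ i, (((n - m) i : ℤ) : ℝ) ^ 2 := by
    rw [Finset.mul_sum, Finset.mul_sum, ← Finset.sum_add_distrib]
    apply Finset.sum_le_sum
    intro i _
    simp only [Pi.sub_apply, Int.cast_sub]
    nlinarith [sq_nonneg ((n i : ℝ) - 2 * m i)]
  have h3 : 0 ≤ ∑ i, ((m i : ℝ)) ^ 2 := by positivity
  apply le_of_sq_le_sq _ (by linarith)
  rw [mul_pow, jb_sq, jb_sq]
  linarith

lemma abs_le_jb {d : ℕ} (m : Fin d → ℤ) (i : Fin d) : |(m i : ℝ)| ≤ jb m := by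
  unfold jb
  apply Real.abs_le_sqrt
  have := Finset.single_le_sum (f := fun i => ((m i : ℝ)) ^ 2)
    (fun i _ => sq_nonneg _) (Finset.mem_univ i)
  linarith

open Classical in
lemma count_bound {d : ℕ} (T : ℝ) (hT : 0 < T) (c : ENNReal) :
    ∑' m : Fin d → ℤ, (if jb m < T then c else 0) ≤ ENNReal.ofReal ((3 * T) ^ d) * c := by
  by_cases h1 : T < 1
  · have : ∀ m : Fin d → ℤ, (if jb m < T then c else 0) = 0 := by
      intro m
      rw [if_neg]
      have := one_le_jb m
      linarith
    simp [this]
  · push Not at h1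
    set F : Finset (Fin d → ℤ) := Fintype.piFinset (fun _ => Finset.Icc (-⌊T⌋) ⌊T⌋) with hF
    have hsub : ∀ m : Fin d → ℤ, m ∉ F → (if jb m < T then c else 0) = 0 := by
      intro m hm
      rw [if_neg]
      intro hlt
      apply hm
      rw [hF, Fintype.mem_piFinset]
      intro i
      have h2 := abs_le.1 ((abs_le_jb m i).trans hlt.le)
      rw [Finset.mem_Icc]
      constructor
      · have : -m i ≤ ⌊T⌋ := Int.le_floor.2 (by push_cast; linarith)
        linarith
      · exact Int.le_floor.2 h2.2
    rw [tsum_eq_sum hsub]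
    calc ∑ m ∈ F, (if jb m < T then c else 0) ≤ ∑ m ∈ F, c := by
          apply Finset.sum_le_sum
          intro m _
          split_ifs <;> simp
      _ = (F.card : ENNReal) * c := by simp
      _ ≤ _ := by
          gcongr
          rw [← ENNReal.ofReal_natCast]
          apply ENNReal.ofReal_le_ofReal
          have hfl : 0 ≤ ⌊T⌋ := Int.floor_nonneg.2 hT.le
          have hc : F.card = (⌊T⌋ + 1 - -⌊T⌋).toNat ^ d := by
            rw [hF, Fintype.card_piFinset]
            simp
          rw [hc]
          push_cast
          gcongr
          have : (((⌊T⌋ + 1 - -⌊T⌋).toNat : ℤ) : ℝ) = ((⌊T⌋ + 1 - -⌊T⌋ : ℤ) : ℝ) := by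
            rw [Int.toNat_of_nonneg (by linarith)]
          rw [Int.cast_natCast] at this
          rw [this]
          push_cast
          have := Int.floor_le T
          linarith

open Classical in
lemma tail_bound (d : ℕ) (s : ℝ) (hs : (d : ℝ) < s) :
    ∃ C : ℝ, 0 < C ∧ ∀ R : ℝ, 0 < R →
      ∑' m : Fin d → ℤ, (if R ≤ jb m then ENNReal.ofReal (jb m ^ (-s)) else 0)
        ≤ ENNReal.ofReal (C * R ^ ((d : ℝ) - s)) := by
  set q : ℝ := (2 : ℝ) ^ ((d : ℝ) - s) with hq
  have hq0 : 0 < q := by positivity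
  have hq1 : q < 1 := Real.rpow_lt_one_of_one_lt_of_neg (by norm_num) (by linarith)
  have hsum := summable_geometric_of_lt_one hq0.le hq1
  have hpos : 0 < ∑' k : ℕ, q ^ k := by
    rw [tsum_geometric_of_lt_one hq0.le hq1]
    exact inv_pos.2 (by linarith)
  have hs0 : 0 < s := lt_of_le_of_lt (Nat.cast_nonneg d) hs
  refine ⟨6 ^ d * ∑' k : ℕ, q ^ k, by positivity, ?_⟩
  intro R hR
  calc ∑' m : Fin d → ℤ, (if R ≤ jb m then ENNReal.ofReal (jb m ^ (-s)) else 0)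
      ≤ ∑' m : Fin d → ℤ, ∑' k : ℕ, (if jb m < 2 ^ (k + 1) * R then
          ENNReal.ofReal ((2 ^ k * R) ^ (-s)) else 0) := by
        apply ENNReal.tsum_le_tsum
        intro m
        split_ifs with h
        · obtain ⟨k, hk1, hk2⟩ := exists_nat_pow_near (x := jb m / R) (y := 2)
            ((one_le_div hR).2 h) (by norm_num)
          rw [le_div_iff₀ hR] at hk1
          rw [div_lt_iff₀ hR] at hk2
          refine le_trans ?_ (ENNReal.le_tsum k)
          rw [if_pos hk2]
          apply ENNReal.ofReal_le_ofReal
          exact Real.rpow_le_rpow_of_nonpos (by positivity) hk1 (by linarith)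
        · exact zero_le
    _ = ∑' k : ℕ, ∑' m : Fin d → ℤ, (if jb m < 2 ^ (k + 1) * R then
          ENNReal.ofReal ((2 ^ k * R) ^ (-s)) else 0) := ENNReal.tsum_comm
    _ ≤ ∑' k : ℕ, ENNReal.ofReal (6 ^ d * R ^ ((d : ℝ) - s) * q ^ k) := by
        apply ENNReal.tsum_le_tsum
        intro k
        refine (count_bound _ (by positivity) _).trans ?_
        rw [← ENNReal.ofReal_mul (by positivity)]
        apply ENNReal.ofReal_le_ofReal
        apply le_of_eq
        have e1 : (3 * (2 ^ (k + 1) * R)) = 6 * (2 ^ k * R) := by ring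
        have hx : 0 < 2 ^ k * R := by positivity
        rw [e1, mul_pow, mul_assoc, mul_assoc, ← Real.rpow_natCast (2 ^ k * R) d,
          ← Real.rpow_add hx, ← sub_eq_add_neg, Real.mul_rpow (by positivity) hR.le,
          mul_comm (R ^ _), hq, ← Real.rpow_natCast, ← Real.rpow_natCast,
          ← Real.rpow_natCast, ← Real.rpow_mul (by norm_num), ← Real.rpow_mul (by norm_num),
          mul_comm (k : ℝ)]
    _ = _ := by
        rw [← ENNReal.ofReal_tsum_of_nonneg (fun k => by positivity) (hsum.mul_left _),
          tsum_mul_left]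
        congr 1
        ring

lemma rpow_compare (x y b : ℝ) (hx : 0 < x) (hy : 0 < y) (h1 : x ≤ 2 * y) (h2 : y ≤ 2 * x) :
    x ^ (-b) ≤ 2 ^ |b| * y ^ (-b) := by
  rcases le_total 0 b with hb | hb
  · rw [abs_of_nonneg hb]
    have := Real.rpow_le_rpow_of_nonpos hy h2 (neg_nonpos.2 hb)
    rw [Real.mul_rpow (by norm_num) hx.le] at this
    calc x ^ (-b) = 2 ^ b * (2 ^ (-b) * x ^ (-b)) := by
          rw [← mul_assoc, ← Real.rpow_add (by norm_num)]; simp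
      _ ≤ _ := mul_le_mul_of_nonneg_left this (by positivity)
  · rw [abs_of_nonpos hb, ← Real.mul_rpow (by norm_num) hy.le]
    exact Real.rpow_le_rpow hx.le h1 (by linarith)

theorem discrete_convolution_resonant_bound
    (d : ℕ) (hd : 1 ≤ d) (α β : ℝ) (hαβ : (d : ℝ) < α + β) :
    ∃ C : ℝ, 0 < C ∧ ∀ n : Fin d → ℤ,
      ∑' n₁ : {m : Fin d → ℤ //
          enorm' (n - m) ≤ 2 * enorm' m ∧ enorm' m ≤ 2 * enorm' (n - m)},
          ENNReal.ofReal (jb (n₁ : Fin d → ℤ) ^ (-α) * jb (n - (n₁ : Fin d → ℤ)) ^ (-β))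
        ≤ ENNReal.ofReal (C * jb n ^ ((d : ℝ) - α - β)) := by
  classical
  obtain ⟨C, hC, hb⟩ := tail_bound d (α + β) hαβ
  refine ⟨2 ^ |β| * (C * (1 / 4) ^ ((d : ℝ) - (α + β))), by positivity, ?_⟩
  intro n
  have hn := one_le_jb n
  set f : (Fin d → ℤ) → ENNReal := fun m => ENNReal.ofReal (2 ^ |β|) *
    (if jb n / 4 ≤ jb m then ENNReal.ofReal (jb m ^ (-(α + β))) else 0) with hf
  calc _ ≤ ∑' n₁ : {m : Fin d → ℤ //
          enorm' (n - m) ≤ 2 * enorm' m ∧ enorm' m ≤ 2 * enorm' (n - m)}, f n₁ := by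
        apply ENNReal.tsum_le_tsum
        rintro ⟨m, h1, h2⟩
        have hm := one_le_jb m
        have hnm := one_le_jb (n - m)
        have h4 := jb_le_four n m h1
        simp only [hf]
        rw [if_pos (by linarith), ← ENNReal.ofReal_mul (by positivity)]
        apply ENNReal.ofReal_le_ofReal
        have hc := rpow_compare (jb (n - m)) (jb m) β (by linarith) (by linarith)
          (jb_le_two _ _ h1) (jb_le_two _ _ h2)
        rw [neg_add, Real.rpow_add (by linarith)]
        have hp : 0 ≤ jb m ^ (-α) := Real.rpow_nonneg (by linarith) _
        calc _ ≤ jb m ^ (-α) * (2 ^ |β| * jb m ^ (-β)) := mul_le_mul_of_nonneg_left hc hp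
          _ = _ := by ring
    _ ≤ ∑' m, f m := ENNReal.tsum_comp_le_tsum_of_injective Subtype.val_injective f
    _ ≤ _ := by
        rw [hf, ENNReal.tsum_mul_left]
        refine (mul_le_mul_right (hb (jb n / 4) (by linarith)) _).trans ?_
        rw [← ENNReal.ofReal_mul (by positivity)]
        apply ENNReal.ofReal_le_ofReal
        apply le_of_eq
        rw [div_eq_mul_one_div, Real.mul_rpow (by linarith) (by norm_num), ← sub_sub]
        ring
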